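/- Let Z^n be i.i.d. N(0,1), let k = k_n with 1 ≤ k < n, and define p_n = Q^{-1}( (k/(n−k+1)) log n ) and q_n = (1/√n) Q^{-1}(1/n) (assuming (k/(n−k+1)) log n ≤ 1/2). Then P( (1/k)Σ_{i=1}^k Z_{(i)} − (1/n)Σ_{i=1}^n Z_i < p_n − q_n ) ≤ 2/n. -/

import Mathlib

open MeasureTheory ProbabilityTheory

/-- The i.i.d. standard Gaussian measure on `ℝⁿ`. -/
noncomputable def stdGaussianPi (n : ℕ) : Measure (Fin n → ℝ) :=
  Measure.pi fun _ => gaussianReal 0 1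

/-- The standard Gaussian tail function `Q(x) = P(Z > x)`. -/
noncomputable def gaussTail (x : ℝ) : ℝ := ((gaussianReal 0 1) (Set.Ioi x)).toReal

/-- The inverse Gaussian tail function `Q⁻¹`. -/
noncomputable def gaussTailInv (p : ℝ) : ℝ := sInf {x : ℝ | gaussTail x ≤ p}

/-- The `i`-th largest entry of a vector (indexed from `i = 1`). -/
noncomputable def kthLargest {n : ℕ} (z : Fin n → ℝ) (i : ℕ) : ℝ :=
  (List.insertionSort (· ≥ ·) (List.ofFn z)).getD (i - 1) 0

instance stdGaussianPi_prob (n : ℕ) : IsProbabilityMeasure (stdGaussianPi n) := by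
  unfold stdGaussianPi; infer_instance

lemma gaussTail_eq (x : ℝ) : gaussTail x = 1 - cdf (gaussianReal 0 1) x := by
  rw [cdf_eq_real, ← probReal_compl_eq_one_sub measurableSet_Iic, Set.compl_Iic]
  rfl

lemma gaussTail_continuous : Continuous gaussTail := by
  have h : Continuous (cdf (gaussianReal 0 1)) := by
    rw [continuous_iff_continuousAt]
    intro x
    have h1 := (cdf (gaussianReal 0 1)).measure_singleton x
    have := nullSingletonClass_gaussianReal (μ := 0) (v := 1) one_ne_zero
    rw [measure_cdf, measure_singleton] at h1
    have h2 := (cdf (gaussianReal 0 1)).mono.leftLim_le (le_refl x)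
    have h3 : Function.leftLim (cdf (gaussianReal 0 1)) x = cdf (gaussianReal 0 1) x := by
      have := ENNReal.ofReal_eq_zero.1 h1.symm
      linarith
    rw [continuousAt_iff_continuous_left'_right']
    exact ⟨(Monotone.continuousWithinAt_Iio_iff_leftLim_eq (cdf (gaussianReal 0 1)).mono).2 h3,
      ((cdf (gaussianReal 0 1)).right_continuous x).mono Set.Ioi_subset_Ici_self⟩
  have : gaussTail = fun x => 1 - cdf (gaussianReal 0 1) x := funext gaussTail_eq
  rw [this]
  exact continuous_const.sub h

lemma gaussTail_inv {p : ℝ} (hp0 : 0 < p) (hp1 : p < 1) : gaussTail (gaussTailInv p) = p := by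
  have hne : {x : ℝ | gaussTail x ≤ p}.Nonempty := by
    have := (tendsto_cdf_atTop (gaussianReal 0 1)).eventually (lt_mem_nhds (show 1 - p < 1 by linarith))
    obtain ⟨x, hx⟩ := this.exists
    exact ⟨x, by simp only [Set.mem_ofPred_eq, gaussTail_eq]; linarith⟩
  have hbdd : BddBelow {x : ℝ | gaussTail x ≤ p} := by
    have := (tendsto_cdf_atBot (gaussianReal 0 1)).eventually (gt_mem_nhds (show 0 < 1 - p by linarith))
    obtain ⟨x, hx⟩ := this.exists
    refine ⟨x, fun y hy => ?_⟩
    by_contra! hlt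
    have := (cdf (gaussianReal 0 1)).mono hlt.le
    simp only [Set.mem_ofPred_eq, gaussTail_eq] at hy
    linarith
  have hcl : IsClosed {x : ℝ | gaussTail x ≤ p} := isClosed_le gaussTail_continuous continuous_const
  refine le_antisymm (hcl.csInf_mem hne hbdd) ?_
  have hev : ∀ᶠ y in nhdsWithin (gaussTailInv p) (Set.Iio (gaussTailInv p)), p ≤ gaussTail y := by
    filter_upwards [self_mem_nhdsWithin] with y hy
    by_contra! hlt
    exact absurd (csInf_le hbdd (show y ∈ {x : ℝ | gaussTail x ≤ p} from hlt.le)) (not_le.2 hy)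
  exact ge_of_tendsto (gaussTail_continuous.continuousAt.mono_left nhdsWithin_le_nhds) hev

lemma map_sum_std (n : ℕ) (s : Finset (Fin n)) :
    (stdGaussianPi n).map (fun z => ∑ i ∈ s, z i) = gaussianReal 0 (s.card : NNReal) := by
  have hind : iIndepFun (fun (i : Fin n) (z : Fin n → ℝ) => z i) (stdGaussianPi n) :=
    iIndepFun_pi (X := fun _ x => x) (fun _ => aemeasurable_id)
  have hmap (i : Fin n) : (stdGaussianPi n).map (fun z => z i) = gaussianReal 0 1 := by
    exact (measurePreserving_eval (fun _ : Fin n => gaussianReal 0 1) i).map_eq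
  induction s using Finset.induction_on with
  | empty => simp [Measure.map_const]
  | insert a s ha ih =>
    have h := gaussianReal_add_gaussianReal_of_indepFun
      (hind.indepFun_finsetSum_of_notMem (fun i => measurable_pi_apply i) ha) 
      (by simpa [Finset.sum_fn] using ih) (hmap a)
    rw [Finset.card_insert_of_notMem ha]
    convert h using 2
    · ext z; simp [Finset.sum_insert ha, add_comm]
    · simp
    · simp

lemma mean_bound (n : ℕ) (hn : 2 ≤ n) :
    stdGaussianPi n {z | (1 / Real.sqrt n) * gaussTailInv (1 / (n : ℝ)) < (1 / (n : ℝ)) * ∑ i, z i}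
      ≤ ENNReal.ofReal (1 / (n : ℝ)) := by
  have hn0 : (0 : ℝ) < n := by positivity
  have hs : 0 < Real.sqrt n := Real.sqrt_pos.2 hn0
  have hss : Real.sqrt n * Real.sqrt n = n := Real.mul_self_sqrt hn0.le
  have hlt : 1 / (n : ℝ) < 1 := by
    rw [div_lt_one hn0]; exact_mod_cast hn
  have hq := gaussTail_inv (p := 1 / (n : ℝ)) (by positivity) hlt
  have h1 : (stdGaussianPi n).map (fun z => (∑ i, z i) / Real.sqrt n) = gaussianReal 0 1 := by
    have h := map_sum_std n Finset.univ
    have h2 : (fun z : Fin n → ℝ => (∑ i, z i) / Real.sqrt n)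
      = (fun x => x / Real.sqrt n) ∘ (fun z : Fin n → ℝ => ∑ i, z i) := rfl
    rw [h2, ← Measure.map_map (by fun_prop) (by fun_prop), h, gaussianReal_map_div_const]
    congr 1
    · simp
    · ext
      simp [hn0.le, hn0.ne']
  have h3 : {z : Fin n → ℝ | (1 / Real.sqrt n) * gaussTailInv (1 / (n : ℝ)) < (1 / (n : ℝ)) * ∑ i, z i}
      = (fun z => (∑ i, z i) / Real.sqrt n) ⁻¹' Set.Ioi (gaussTailInv (1 / (n : ℝ))) := by
    ext z
    simp only [Set.mem_ofPred_eq, Set.mem_preimage, Set.mem_Ioi]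
    have : (1 / (n : ℝ)) * ∑ i, z i = (1 / Real.sqrt n) * ((∑ i, z i) / Real.sqrt n) := by
      rw [div_mul_div_comm, hss]; ring
    rw [this]
    exact mul_lt_mul_iff_right₀ (by positivity)
  rw [h3, ← Measure.map_apply (by fun_prop) measurableSet_Ioi, h1]
  have h4 := ENNReal.ofReal_toReal (measure_ne_top (gaussianReal 0 1)
    (Set.Ioi (gaussTailInv (1 / (n : ℝ)))))
  change ENNReal.ofReal (gaussTail _) = _ at h4
  rw [hq] at h4
  exact h4.ge

lemma sort_getElem {n : ℕ} (z : Fin n → ℝ) {i j : ℕ} (hij : i ≤ j) (hj : j < n) :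
    kthLargest z (j + 1) ≤ kthLargest z (i + 1) := by
  unfold kthLargest
  have hlen : (List.insertionSort (· ≥ ·) (List.ofFn z)).length = n := by simp
  rw [List.getD_eq_getElem _ _ (by omega), List.getD_eq_getElem _ _ (by omega)]
  rcases hij.eq_or_lt with rfl | h
  · exact le_rfl
  · have := List.pairwise_iff_getElem.1 (List.pairwise_insertionSort (· ≥ ·) (List.ofFn z)) i j
      (by omega) (by omega) h
    simpa using this

lemma card_low {n k : ℕ} (hk1 : 1 ≤ k) (hkn : k < n) (z : Fin n → ℝ) (x : ℝ)
    (h : kthLargest z k < x) : n - k + 1 ≤ (Finset.univ.filter (fun i => z i < x)).card := by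
  classical
  set l := List.insertionSort (· ≥ ·) (List.ofFn z) with hl
  have hlen : l.length = n := by simp [hl]
  have h1 : (Finset.univ.filter (fun i => z i < x)).card = l.countP (fun a => decide (a < x)) := by
    rw [(List.perm_insertionSort (· ≥ ·) (List.ofFn z)).countP_eq, ← Multiset.coe_countP,
      ← Fin.univ_val_map, Multiset.countP_map]
    rfl
  rw [h1]
  have h2 : (l.drop (k - 1)).countP (fun a => decide (a < x)) = (l.drop (k - 1)).length := by
    rw [List.countP_eq_length]
    intro a ha
    obtain ⟨m, hm, rfl⟩ := List.getElem_of_mem ha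
    rw [List.length_drop] at hm
    rw [List.getElem_drop]
    have := sort_getElem z (i := k - 1) (j := k - 1 + m) (by omega) (by omega)
    rw [Nat.sub_add_cancel hk1] at this
    have h3 := this.trans_lt h
    unfold kthLargest at h3
    rw [List.getD_eq_getElem _ _ (by simp; omega)] at h3
    simpa using h3
  have h3 := (List.drop_sublist (k - 1) l).countP_le (p := fun a => decide (a < x))
  rw [h2, List.length_drop] at h3
  omega

lemma measure_low {n : ℕ} (S : Finset (Fin n)) (x : ℝ) :
    stdGaussianPi n {z | ∀ i ∈ S, z i < x} = (gaussianReal 0 1 (Set.Iio x)) ^ S.card := by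
  have : {z : Fin n → ℝ | ∀ i ∈ S, z i < x} = Set.pi S (fun _ => Set.Iio x) := by
    ext z; simp [Set.mem_pi]
  classical
  rw [this, stdGaussianPi, Measure.pi_pi_finset]
  simp

lemma order_bound (n k : ℕ) (hk1 : 1 ≤ k) (hkn : k < n)
    (hsmall : (k : ℝ) / ((n : ℝ) - k + 1) * Real.log n ≤ 1 / 2) :
    stdGaussianPi n {z | kthLargest z k < gaussTailInv ((k : ℝ) / ((n : ℝ) - k + 1) * Real.log n)}
      ≤ ENNReal.ofReal (1 / (n : ℝ)) := by
  have hn1 : (1 : ℝ) < n := by exact_mod_cast (by omega : 1 < n)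
  have hn0 : (0 : ℝ) < n := by linarith
  have hkn' : (k : ℝ) < n := by exact_mod_cast hkn
  have hk0 : (0 : ℝ) < k := by exact_mod_cast hk1
  have hL := Real.log_pos hn1
  have hm : 0 < (n : ℝ) - k + 1 := by linarith
  set p := (k : ℝ) / ((n : ℝ) - k + 1) * Real.log n with hp
  have hp0 : 0 < p := by positivity
  have hq := gaussTail_inv hp0 (by linarith)
  set x := gaussTailInv p
  have hIio : gaussianReal 0 1 (Set.Iio x) ≤ ENNReal.ofReal (Real.exp (-p)) := by
    have : (gaussianReal 0 1).real (Set.Iio x) ≤ Real.exp (-p) := by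
      calc (gaussianReal 0 1).real (Set.Iio x) ≤ (gaussianReal 0 1).real (Set.Iic x) :=
            measureReal_mono Set.Iio_subset_Iic_self
        _ = 1 - p := by rw [← cdf_eq_real]; linarith [gaussTail_eq x]
        _ ≤ _ := Real.one_sub_le_exp_neg p
    rw [← ENNReal.ofReal_toReal (measure_ne_top (gaussianReal 0 1) (Set.Iio x))]
    exact ENNReal.ofReal_le_ofReal this
  have hsub : {z : Fin n → ℝ | kthLargest z k < x} ⊆
      ⋃ S ∈ (Finset.univ : Finset (Fin n)).powersetCard (n - k + 1), {z | ∀ i ∈ S, z i < x} := by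
    intro z hz
    obtain ⟨S, hS, hc⟩ := Finset.exists_subset_card_eq (card_low hk1 hkn z x hz)
    simp only [Set.mem_iUnion]
    refine ⟨S, Finset.mem_powersetCard.2 ⟨Finset.subset_univ _, hc⟩, fun i hi => ?_⟩
    simpa using hS hi
  calc _ ≤ stdGaussianPi n (⋃ S ∈ (Finset.univ : Finset (Fin n)).powersetCard (n - k + 1),
            {z | ∀ i ∈ S, z i < x}) := measure_mono hsub
    _ ≤ ∑ S ∈ (Finset.univ : Finset (Fin n)).powersetCard (n - k + 1),
          stdGaussianPi n {z | ∀ i ∈ S, z i < x} := measure_biUnion_finset_le _ _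
    _ ≤ ∑ S ∈ (Finset.univ : Finset (Fin n)).powersetCard (n - k + 1),
          ENNReal.ofReal (1 / (n : ℝ) ^ k) := by
        refine Finset.sum_le_sum fun S hS => ?_
        rw [measure_low, (Finset.mem_powersetCard.1 hS).2]
        refine (pow_le_pow_left' hIio _).trans ?_
        rw [← ENNReal.ofReal_pow (Real.exp_pos _).le, ← Real.exp_nat_mul]
        refine ENNReal.ofReal_le_ofReal (le_of_eq ?_)
        have : ((n - k + 1 : ℕ) : ℝ) * -p = -(k * Real.log n) := by
          push_cast [Nat.cast_sub hkn.le]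
          rw [hp]; field_simp
        rw [this, Real.exp_neg, Real.exp_nat_mul, Real.exp_log hn0, one_div]
    _ = ENNReal.ofReal ((n.choose (k - 1) : ℝ) * (1 / (n : ℝ) ^ k)) := by
        rw [Finset.sum_const, Finset.card_powersetCard, Finset.card_univ, Fintype.card_fin,
          ← Nat.choose_symm (by omega : n - k + 1 ≤ n), nsmul_eq_mul,
          ENNReal.ofReal_mul (by positivity), ENNReal.ofReal_natCast,
          (by omega : n - (n - k + 1) = k - 1)]
    _ ≤ _ := by
        refine ENNReal.ofReal_le_ofReal ?_
        have h1 : (n.choose (k - 1) : ℝ) ≤ (n : ℝ) ^ (k - 1) := by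
          exact_mod_cast Nat.choose_le_pow n (k - 1)
        have h2 : (n : ℝ) ^ k = n ^ (k - 1) * n := by
          rw [← pow_succ, Nat.sub_add_cancel hk1]
        rw [h2, mul_one_div, div_le_div_iff₀ (by positivity) hn0]
        nlinarith

/-- `P( (1/k)·Σ_{i≤k} Z₍ᵢ₎ − (1/n)·Σᵢ Zᵢ < pₙ − qₙ ) ≤ 2/n`, where
`pₙ = Q⁻¹((k/(n−k+1)) log n)` and `qₙ = (1/√n) Q⁻¹(1/n)`. -/
theorem stmt13 (n k : ℕ) (hk1 : 1 ≤ k) (hkn : k < n)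
    (hsmall : (k : ℝ) / ((n : ℝ) - k + 1) * Real.log n ≤ 1 / 2) :
    stdGaussianPi n
      {z | (1 / (k : ℝ)) * (∑ i ∈ Finset.range k, kthLargest z (i + 1))
            - (1 / (n : ℝ)) * ∑ i, z i
          < gaussTailInv ((k : ℝ) / ((n : ℝ) - k + 1) * Real.log n)
            - (1 / Real.sqrt n) * gaussTailInv (1 / (n : ℝ))}
      ≤ ENNReal.ofReal (2 / (n : ℝ)) := by
  have hk0 : (0 : ℝ) < k := by exact_mod_cast hk1
  have hsub : {z : Fin n → ℝ | (1 / (k : ℝ)) * (∑ i ∈ Finset.range k, kthLargest z (i + 1))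
            - (1 / (n : ℝ)) * ∑ i, z i
          < gaussTailInv ((k : ℝ) / ((n : ℝ) - k + 1) * Real.log n)
            - (1 / Real.sqrt n) * gaussTailInv (1 / (n : ℝ))} ⊆
      {z | kthLargest z k < gaussTailInv ((k : ℝ) / ((n : ℝ) - k + 1) * Real.log n)} ∪
      {z | (1 / Real.sqrt n) * gaussTailInv (1 / (n : ℝ)) < (1 / (n : ℝ)) * ∑ i, z i} := by
    intro z hz
    by_contra hcon
    simp only [Set.mem_union, Set.mem_ofPred_eq, not_or, not_lt] at hcon hz
    have h1 : (k : ℝ) * kthLargest z k ≤ ∑ i ∈ Finset.range k, kthLargest z (i + 1) := by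
      have := Finset.card_nsmul_le_sum (Finset.range k) (fun i => kthLargest z (i + 1))
        (kthLargest z k) (fun i hi => by
          have hi' := Finset.mem_range.1 hi
          have := sort_getElem z (i := i) (j := k - 1) (by omega) (by omega)
          rwa [Nat.sub_add_cancel hk1] at this)
      simpa using this
    have h2 : kthLargest z k ≤ (1 / (k : ℝ)) * (∑ i ∈ Finset.range k, kthLargest z (i + 1)) := by
      rw [one_div, ← div_eq_inv_mul, le_div_iff₀ hk0]
      linarith
    linarith [hcon.1, hcon.2]
  refine (measure_mono hsub).trans ((measure_union_le _ _).trans ?_)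
  refine (add_le_add (order_bound n k hk1 hkn hsmall) (mean_bound n (by omega))).trans ?_
  rw [← ENNReal.ofReal_add (by positivity) (by positivity)]
  refine ENNReal.ofReal_le_ofReal (le_of_eq (by ring))
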